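/- arXiv:2404.07661 — 8 statements merged into one kernel-verified Lean document; each statement's English description precedes it below -/
import Mathlib

section
/- Let (X, μ) be a measurable space with a finite measure μ, let f₀, f₁ : X → [0,∞) be measurable with ∫ f₀ dμ = ∫ f₁ dμ = 1, and fix π ∈ (0,1). Let M : ℝ × ℝ × ℝ → ℝ be continuously differentiable such that the partial derivatives ∂₁M(p,q,π) and ∂₂M(p,q,π) are strictly positive for all p, q ∈ [0,1]. For a measurable φ : X → [0,1] set S(φ) = ∫ φ f₁ dμ, T(φ) = ∫ (1−φ) f₀ dμ and U(φ) = M(S(φ), T(φ), π). If φ* maximizes U over all measurable functions φ : X → [0,1], then, setting δ* = ∂₂M(S(φ*),T(φ*),π) / ∂₁M(S(φ*),T(φ*),π), one has φ*(x) = 1 for μ-almost every x with f₁(x) > δ* f₀(x), and φ*(x) = 0 for μ-almost every x with f₁(x) < δ* f₀(x). -/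
open MeasureTheory Set

/-!
The performance vector `(S φ, T φ, π)` is an affine function of `φ`, so it ranges over a convex set
as `φ` runs through the randomized classifiers. At a maximizer `φ*` the derivative of `M` is
therefore nonpositive in every direction pointing into this set, which says that `φ*` maximizes the
linear functional `ψ ↦ ∫ ψ (a f₁ - b f₀) dμ`, where `a = ∂₁M` and `b = ∂₂M` at `φ*`. Comparing `φ*`
with the indicator of the positivity set of `a f₁ - b f₀` shows that a maximizer of this functional
is `1` where the integrand is positive and `0` where it is negative; dividing by `a > 0` gives the
threshold `b / a`.
-/

section RandomizedClassifier

variable {X : Type*} [MeasurableSpace X] {φ : X → ℝ}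

/-- Randomized classifiers: `φ x` is the probability of assigning `x` to the positive class. They
are encoded as real-valued functions so that they form a convex subset of the vector space
`X → ℝ`. -/
structure IsRandomizedClassifier (φ : X → ℝ) : Prop where
  measurable : Measurable φ
  mem_Icc : ∀ x, φ x ∈ Icc (0 : ℝ) 1

namespace IsRandomizedClassifier

theorem nonneg (hφ : IsRandomizedClassifier φ) (x : X) : 0 ≤ φ x := (hφ.mem_Icc x).1

theorem le_one (hφ : IsRandomizedClassifier φ) (x : X) : φ x ≤ 1 := (hφ.mem_Icc x).2

theorem one_sub (hφ : IsRandomizedClassifier φ) : IsRandomizedClassifier (fun x ↦ 1 - φ x) where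
  measurable := hφ.measurable.const_sub 1
  mem_Icc x := Icc.mem_iff_one_sub_mem.1 (hφ.mem_Icc x)

theorem indicator_one {s : Set X} (hs : MeasurableSet s) :
    IsRandomizedClassifier (s.indicator (1 : X → ℝ)) where
  measurable := measurable_one.indicator hs
  mem_Icc x := ⟨indicator_nonneg (fun _ _ ↦ zero_le_one) x,
    indicator_le_self' (fun _ _ ↦ zero_le_one) x⟩

theorem integrable_smul {E : Type*} [NormedAddCommGroup E] [NormedSpace ℝ E] {μ : Measure X}
    {F : X → E} (hφ : IsRandomizedClassifier φ) (hF : Integrable F μ) :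
    Integrable (fun x ↦ φ x • F x) μ :=
  hF.bdd_smul 1 hφ.measurable.aestronglyMeasurable <| .of_forall fun x ↦ by
    simpa [abs_of_nonneg (hφ.nonneg x)] using hφ.le_one x

end IsRandomizedClassifier

theorem convex_setOf_isRandomizedClassifier :
    Convex ℝ {φ : X → ℝ | IsRandomizedClassifier φ} :=
  fun _ hφ _ hψ a b ha hb hab ↦
    ⟨(hφ.measurable.const_smul a).add (hψ.measurable.const_smul b),
      fun x ↦ convex_Icc 0 1 (hφ.mem_Icc x) (hψ.mem_Icc x) ha hb hab⟩

theorem convex_image_integral_smul {E : Type*} [NormedAddCommGroup E] [NormedSpace ℝ E]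
    {μ : Measure X} {F : X → E} (hF : Integrable F μ) :
    Convex ℝ ((fun φ : X → ℝ ↦ ∫ x, φ x • F x ∂μ) '' {φ | IsRandomizedClassifier φ}) := by
  rintro _ ⟨φ, hφ, rfl⟩ _ ⟨ψ, hψ, rfl⟩ a b ha hb hab
  refine ⟨a • φ + b • ψ, convex_setOf_isRandomizedClassifier hφ hψ ha hb hab, ?_⟩
  simp only [Pi.add_apply, Pi.smul_apply, add_smul, smul_assoc]
  rw [integral_add ((hφ.integrable_smul hF).fun_smul a) ((hψ.integrable_smul hF).fun_smul b),
    integral_smul, integral_smul]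

end RandomizedClassifier

section FirstOrderCondition

variable {X : Type*} [MeasurableSpace X] {μ : Measure X} {φ : X → ℝ}

theorem isMaxOn_integral_mul_of_hasFDerivAt {E : Type*} [NormedAddCommGroup E] [NormedSpace ℝ E]
    [CompleteSpace E] {F : X → E} (hF : Integrable F μ) {J : E → ℝ} {J' : E →L[ℝ] ℝ}
    (hφ : IsRandomizedClassifier φ) (hJ : HasFDerivAt J J' (∫ x, φ x • F x ∂μ))
    (hmax : IsMaxOn (fun ψ : X → ℝ ↦ J (∫ x, ψ x • F x ∂μ)) {ψ | IsRandomizedClassifier ψ} φ) :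
    IsMaxOn (fun ψ : X → ℝ ↦ ∫ x, ψ x * J' (F x) ∂μ) {ψ | IsRandomizedClassifier ψ} φ := by
  intro ψ hψ
  let Φ : (X → ℝ) → E := fun ψ ↦ ∫ x, ψ x • F x ∂μ
  have integral_eq {ψ : X → ℝ} (hψ : IsRandomizedClassifier ψ) :
      ∫ x, ψ x * J' (F x) ∂μ = J' (Φ ψ) := by
    simpa using J'.integral_comp_comm (hψ.integrable_smul hF)
  have hmax_image : IsMaxOn J (Φ '' {ψ | IsRandomizedClassifier ψ}) (Φ φ) := by
    rintro _ ⟨ψ, hψ, rfl⟩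
    exact hmax hψ
  have hdir : Φ ψ - Φ φ ∈ posTangentConeAt (Φ '' {ψ | IsRandomizedClassifier ψ}) (Φ φ) :=
    sub_mem_posTangentConeAt_of_segment_subset <|
      (convex_image_integral_smul hF).segment_subset (mem_image_of_mem Φ hφ)
        (mem_image_of_mem Φ hψ)
  have hderiv : J' (Φ ψ - Φ φ) ≤ 0 :=
    hmax_image.localize.hasFDerivWithinAt_nonpos hJ.hasFDerivWithinAt hdir
  change ∫ x, ψ x * J' (F x) ∂μ ≤ ∫ x, φ x * J' (F x) ∂μ
  rwa [integral_eq hψ, integral_eq hφ, ← sub_nonpos, ← map_sub]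

theorem exists_isRandomizedClassifier_eq_one_of_pos_eq_zero_of_neg {g : X → ℝ}
    (hg : AEMeasurable g μ) :
    ∃ ψ : X → ℝ, IsRandomizedClassifier ψ ∧
      (∀ᵐ x ∂μ, 0 < g x → ψ x = 1) ∧ (∀ᵐ x ∂μ, g x < 0 → ψ x = 0) := by
  obtain ⟨s, -, hs, hsg⟩ :=
    (nullMeasurableSet_lt (aemeasurable_const (b := (0 : ℝ))) hg).exists_measurable_superset_ae_eq
  refine ⟨s.indicator 1, .indicator_one hs, ?_, ?_⟩
  · filter_upwards [hsg.mem_iff] with x hx hgx using indicator_of_mem (hx.2 hgx) _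
  · filter_upwards [hsg.mem_iff] with x hx hgx
    exact indicator_of_notMem (fun hxs ↦ (hx.1 hxs).not_gt hgx) _

theorem ae_eq_one_and_ae_eq_zero_of_isMaxOn_integral_mul {g : X → ℝ} (hg : Integrable g μ)
    (hφ : IsRandomizedClassifier φ)
    (hmax : IsMaxOn (fun ψ : X → ℝ ↦ ∫ x, ψ x * g x ∂μ) {ψ | IsRandomizedClassifier ψ} φ) :
    (∀ᵐ x ∂μ, 0 < g x → φ x = 1) ∧ (∀ᵐ x ∂μ, g x < 0 → φ x = 0) := by
  obtain ⟨ψ, hψ, hψ_pos, hψ_neg⟩ :=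
    exists_isRandomizedClassifier_eq_one_of_pos_eq_zero_of_neg hg.aemeasurable
  have gain_nonneg : 0 ≤ᵐ[μ] fun x ↦ ψ x * g x - φ x * g x := by
    filter_upwards [hψ_pos, hψ_neg] with x hpos hneg
    rw [Pi.zero_apply, ← sub_mul]
    rcases lt_trichotomy (g x) 0 with hgx | hgx | hgx
    · exact mul_nonneg_of_nonpos_of_nonpos (by simp [hneg hgx, hφ.nonneg x]) hgx.le
    · simp [hgx]
    · exact mul_nonneg (by simp [hpos hgx, hφ.le_one x]) hgx.le
  have hψg : Integrable (fun x ↦ ψ x * g x) μ := hψ.integrable_smul hg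
  have hφg : Integrable (fun x ↦ φ x * g x) μ := hφ.integrable_smul hg
  have gain_integral : ∫ x, ψ x * g x - φ x * g x ∂μ = 0 := by
    refine le_antisymm ?_ (integral_nonneg_of_ae gain_nonneg)
    rw [integral_sub hψg hφg]
    exact sub_nonpos.2 (hmax hψ)
  have gain_zero : ∀ᵐ x ∂μ, ψ x * g x = φ x * g x := by
    filter_upwards [(integral_eq_zero_iff_of_nonneg_ae gain_nonneg (hψg.sub hφg)).1 gain_integral]
      with x hx using sub_eq_zero.1 hx
  constructor
  · filter_upwards [gain_zero, hψ_pos] with x hx hpos hgx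
    rw [← mul_right_cancel₀ hgx.ne' hx, hpos hgx]
  · filter_upwards [gain_zero, hψ_neg] with x hx hneg hgx
    rw [← mul_right_cancel₀ hgx.ne hx, hneg hgx]

end FirstOrderCondition

section Performance

variable {X : Type*} [MeasurableSpace X] {μ : Measure X} {f f₀ f₁ φ : X → ℝ}

/-- The sensitivity `π_{1|1}(φ)` of a randomized classifier `φ`, where `f₁` is the density of the
positive class. -/
noncomputable def sensitivity (μ : Measure X) (f₁ φ : X → ℝ) : ℝ := ∫ x, φ x * f₁ x ∂μ

/-- The specificity `π_{0|0}(φ)` of a randomized classifier `φ`, where `f₀` is the density of the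
negative class. -/
noncomputable def specificity (μ : Measure X) (f₀ φ : X → ℝ) : ℝ := ∫ x, (1 - φ x) * f₀ x ∂μ

theorem sensitivity_mem_Icc (hf : Integrable f μ) (hf_nonneg : 0 ≤ᵐ[μ] f)
    (hφ : IsRandomizedClassifier φ) : sensitivity μ f φ ∈ Icc 0 (∫ x, f x ∂μ) := by
  constructor
  · refine integral_nonneg_of_ae ?_
    filter_upwards [hf_nonneg] with x hx using mul_nonneg (hφ.nonneg x) hx
  · refine integral_mono_ae (hφ.integrable_smul hf) hf ?_
    filter_upwards [hf_nonneg] with x hx using mul_le_of_le_one_left hx (hφ.le_one x)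

theorem specificity_mem_Icc (hf : Integrable f μ) (hf_nonneg : 0 ≤ᵐ[μ] f)
    (hφ : IsRandomizedClassifier φ) : specificity μ f φ ∈ Icc 0 (∫ x, f x ∂μ) :=
  sensitivity_mem_Icc hf hf_nonneg hφ.one_sub

theorem specificity_eq_integral_sub_sensitivity (hf : Integrable f μ)
    (hφ : IsRandomizedClassifier φ) :
    specificity μ f φ = ∫ x, f x ∂μ - sensitivity μ f φ := by
  simp only [specificity, sensitivity, sub_mul, one_mul]
  exact integral_sub hf (hφ.integrable_smul hf)

theorem performance_eq_add_integral_smul (hf₀ : Integrable f₀ μ) (hf₁ : Integrable f₁ μ)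
    (hφ : IsRandomizedClassifier φ) (π : ℝ) :
    (sensitivity μ f₁ φ, specificity μ f₀ φ, π) =
      (0, ∫ x, f₀ x ∂μ, π) + ∫ x, φ x • (f₁ x, -f₀ x, (0 : ℝ)) ∂μ := by
  have hφf₀ : Integrable (fun x ↦ -(φ x * f₀ x)) μ := (hφ.integrable_smul hf₀).neg
  have hφf₁ : Integrable (fun x ↦ φ x * f₁ x) μ := hφ.integrable_smul hf₁
  have hzero : Integrable (fun _ : X ↦ (0 : ℝ)) μ := integrable_zero _ _ _
  simp only [Prod.smul_mk, smul_eq_mul, mul_neg, mul_zero]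
  rw [integral_pair hφf₁ (hφf₀.prodMk hzero), integral_pair hφf₀ hzero, integral_neg,
    specificity_eq_integral_sub_sensitivity hf₀ hφ]
  simp [sensitivity, sub_eq_add_neg]

theorem bayes_classifier_threshold_general (hf₀ : Integrable f₀ μ) (hf₁ : Integrable f₁ μ)
    {π : ℝ} {M : ℝ × ℝ × ℝ → ℝ} (hφ : IsRandomizedClassifier φ)
    (hM : DifferentiableAt ℝ M (sensitivity μ f₁ φ, specificity μ f₀ φ, π))
    (hM₁ : 0 < fderiv ℝ M (sensitivity μ f₁ φ, specificity μ f₀ φ, π) (1, 0, 0))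
    (hmax : IsMaxOn (fun ψ ↦ M (sensitivity μ f₁ ψ, specificity μ f₀ ψ, π))
      {ψ | IsRandomizedClassifier ψ} φ) {δ : ℝ}
    (hδ : δ = fderiv ℝ M (sensitivity μ f₁ φ, specificity μ f₀ φ, π) (0, 1, 0) /
      fderiv ℝ M (sensitivity μ f₁ φ, specificity μ f₀ φ, π) (1, 0, 0)) :
    (∀ᵐ x ∂μ, f₁ x > δ * f₀ x → φ x = 1) ∧ (∀ᵐ x ∂μ, f₁ x < δ * f₀ x → φ x = 0) := by
  let F : X → ℝ × ℝ × ℝ := fun x ↦ (f₁ x, -f₀ x, 0)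
  have hF : Integrable F μ := hf₁.prodMk (hf₀.neg.prodMk (integrable_zero _ _ _))
  let J : ℝ × ℝ × ℝ → ℝ := fun v ↦ M ((0, ∫ x, f₀ x ∂μ, π) + v)
  set M' := fderiv ℝ M (sensitivity μ f₁ φ, specificity μ f₀ φ, π)
  have hJ : HasFDerivAt J M' (∫ x, φ x • F x ∂μ) := by
    rw [hasFDerivAt_comp_add_left, ← performance_eq_add_integral_smul hf₀ hf₁ hφ]
    exact hM.hasFDerivAt
  have hJmax : IsMaxOn (fun ψ : X → ℝ ↦ J (∫ x, ψ x • F x ∂μ))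
      {ψ | IsRandomizedClassifier ψ} φ := fun ψ hψ ↦ by
    simpa only [mem_ofPred_eq, J, F, ← performance_eq_add_integral_smul hf₀ hf₁ hψ,
      ← performance_eq_add_integral_smul hf₀ hf₁ hφ] using hmax hψ
  have hM'F (x : X) : M' (F x) = M' (1, 0, 0) • (f₁ x - δ * f₀ x) := by
    have hFx : F x = f₁ x • (1, 0, 0) - f₀ x • (0, 1, 0) := by simp [F]
    simp only [hFx, map_sub, map_smul, hδ, smul_eq_mul]
    field_simp
  have hlin := ae_eq_one_and_ae_eq_zero_of_isMaxOn_integral_mul (M'.integrable_comp hF) hφ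
    (isMaxOn_integral_mul_of_hasFDerivAt hF hφ hJ hJmax)
  simpa only [hM'F, smul_pos_iff_of_pos_left hM₁, smul_neg_iff_of_pos_left hM₁, sub_pos, sub_neg,
    gt_iff_lt] using hlin

end Performance

theorem bayes_classifier_threshold
    {X : Type*} [MeasurableSpace X] (μ : Measure X) [IsFiniteMeasure μ]
    (f₀ f₁ : X → ℝ) (hf₀m : Measurable f₀) (hf₁m : Measurable f₁)
    (hf₀0 : ∀ x, 0 ≤ f₀ x) (hf₁0 : ∀ x, 0 ≤ f₁ x)
    (hf₀1 : ∫ x, f₀ x ∂μ = 1) (hf₁1 : ∫ x, f₁ x ∂μ = 1)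
    (π : ℝ) (hπ : π ∈ Ioo (0:ℝ) 1)
    (M : ℝ × ℝ × ℝ → ℝ) (hM : ContDiff ℝ 1 M)
    (hM1 : ∀ p q : ℝ, p ∈ Icc (0:ℝ) 1 → q ∈ Icc (0:ℝ) 1 →
      0 < fderiv ℝ M (p, q, π) (1, 0, 0))
    (hM2 : ∀ p q : ℝ, p ∈ Icc (0:ℝ) 1 → q ∈ Icc (0:ℝ) 1 →
      0 < fderiv ℝ M (p, q, π) (0, 1, 0))
    (S T : (X → ℝ) → ℝ)
    (hS : ∀ φ : X → ℝ, S φ = ∫ x, φ x * f₁ x ∂μ)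
    (hT : ∀ φ : X → ℝ, T φ = ∫ x, (1 - φ x) * f₀ x ∂μ)
    (U : (X → ℝ) → ℝ) (hU : ∀ φ : X → ℝ, U φ = M (S φ, T φ, π))
    (φstar : X → ℝ) (hφstarm : Measurable φstar)
    (hφstar01 : ∀ x, φstar x ∈ Icc (0:ℝ) 1)
    (hmax : ∀ φ : X → ℝ, Measurable φ → (∀ x, φ x ∈ Icc (0:ℝ) 1) → U φ ≤ U φstar)
    (δstar : ℝ)
    (hδ : δstar = fderiv ℝ M (S φstar, T φstar, π) (0, 1, 0) /
                  fderiv ℝ M (S φstar, T φstar, π) (1, 0, 0)) :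
    (∀ᵐ x ∂μ, f₁ x > δstar * f₀ x → φstar x = 1) ∧
    (∀ᵐ x ∂μ, f₁ x < δstar * f₀ x → φstar x = 0) := by
  obtain rfl : S = sensitivity μ f₁ := funext hS
  obtain rfl : T = specificity μ f₀ := funext hT
  have hi₀ := integrable_of_integral_eq_one hf₀1
  have hi₁ := integrable_of_integral_eq_one hf₁1
  have hφ : IsRandomizedClassifier φstar := ⟨hφstarm, hφstar01⟩
  have hS01 := hf₁1 ▸ sensitivity_mem_Icc hi₁ (.of_forall hf₁0) hφ
  have hT01 := hf₀1 ▸ specificity_mem_Icc hi₀ (.of_forall hf₀0) hφ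
  exact bayes_classifier_threshold_general hi₀ hi₁ hφ (hM.differentiable one_ne_zero _)
    (hM1 _ _ hS01 hT01) (fun ψ hψ ↦ by simpa [hU] using hmax ψ hψ.1 hψ.2) hδ
end

section
/- Let M_Y(p,q,π) = (√(pq) − √((1−p)(1−q))) / (√(pq) + √((1−p)(1−q))) (Yule's coefficient of colligation, which does not depend on π). Then for all p, q ∈ (0,1), the ratio of partial derivatives satisfies ∂_q M_Y(p,q,π) / ∂_p M_Y(p,q,π) = p(1−p) / (q(1−q)); in particular this ratio coincides with the corresponding ratio for Yule's coefficient of association. -/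
/-!
Yule's two coefficients depend on `(p, q)` only through the diagnostic odds ratio
`ω = p / (1 - p) * (q / (1 - q))`: they are `(√ω - 1) / (√ω + 1)` and `(ω - 1) / (ω + 1)`.
By the chain rule the partial derivatives of `φ ∘ ω` share the factor `φ' (ω)`, so their ratio is
that of the partial derivatives of `ω`, whatever `φ` is.
-/

open Set

open Filter Topology

theorem ne_one_and_ne_one_of_one_sub_mul_one_sub_ne_zero {R : Type*} [Ring R] {p q : R}
    (h : (1 - p) * (1 - q) ≠ 0) : p ≠ 1 ∧ q ≠ 1 :=
  ⟨(sub_ne_zero.mp (left_ne_zero_of_mul h)).symm, (sub_ne_zero.mp (right_ne_zero_of_mul h)).symm⟩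

theorem sub_div_add_eq_div_sub_one_div_div_add_one {K : Type*} [DivisionRing K] (a : K)
    {b : K} (hb : b ≠ 0) : (a - b) / (a + b) = (a / b - 1) / (a / b + 1) := by
  rw [div_sub_one hb, div_add_one hb, div_div_div_cancel_right₀ hb]

theorem hasDerivAt_sub_one_div_add_one {𝕜 : Type*} [NontriviallyNormedField 𝕜] {x : 𝕜}
    (hx : x + 1 ≠ 0) :
    HasDerivAt (fun y : 𝕜 => (y - 1) / (y + 1)) (2 / (x + 1) ^ 2) x :=
  (((hasDerivAt_id' x).sub_const 1).fun_div ((hasDerivAt_id' x).add_const 1) hx).congr_deriv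
    (by ring)

/-- The odds ratio of a binary classifier with sensitivity `p` and specificity `q`.
Division by zero makes it `0` at `p = 1` or `q = 1`, where the odds ratio is undefined. -/
noncomputable def diagnosticOddsRatio (p q : ℝ) : ℝ :=
  p / (1 - p) * (q / (1 - q))

section OddsRatio

variable {p q : ℝ}

theorem diagnosticOddsRatio_comm (p q : ℝ) :
    diagnosticOddsRatio p q = diagnosticOddsRatio q p :=
  mul_comm _ _

theorem diagnosticOddsRatio_eq_div (p q : ℝ) :
    diagnosticOddsRatio p q = p * q / ((1 - p) * (1 - q)) :=
  div_mul_div_comm _ _ _ _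

theorem diagnosticOddsRatio_pos (hpq : 0 < p * q) (hpq' : 0 < (1 - p) * (1 - q)) :
    0 < diagnosticOddsRatio p q :=
  diagnosticOddsRatio_eq_div p q ▸ div_pos hpq hpq'

theorem hasDerivAt_diagnosticOddsRatio_left (hp : p ≠ 1) (q : ℝ) :
    HasDerivAt (fun p' => diagnosticOddsRatio p' q) (1 / (1 - p) ^ 2 * (q / (1 - q))) p := by
  have hodds : HasDerivAt (fun p' : ℝ => p' / (1 - p')) (1 / (1 - p) ^ 2) p :=
    ((hasDerivAt_id' p).fun_div ((hasDerivAt_id' p).const_sub 1)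
      (sub_ne_zero.mpr hp.symm)).congr_deriv (by ring)
  exact hodds.mul_const _

theorem hasDerivAt_diagnosticOddsRatio_right (p : ℝ) (hq : q ≠ 1) :
    HasDerivAt (fun q' => diagnosticOddsRatio p q') (1 / (1 - q) ^ 2 * (p / (1 - p))) q := by
  simpa only [diagnosticOddsRatio_comm p] using hasDerivAt_diagnosticOddsRatio_left hq p

theorem deriv_div_deriv_of_eventuallyEq_comp_diagnosticOddsRatio {M : ℝ → ℝ → ℝ} {φ : ℝ → ℝ}
    {φ' : ℝ} (hp : p ≠ 1) (hq : q ≠ 1)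
    (hM : ∀ᶠ x in 𝓝 (p, q), M x.1 x.2 = φ (diagnosticOddsRatio x.1 x.2))
    (hφ : HasDerivAt φ φ' (diagnosticOddsRatio p q)) (hφ' : φ' ≠ 0) :
    deriv (fun q' => M p q') q / deriv (fun p' => M p' q) p = p * (1 - p) / (q * (1 - q)) := by
  have hM_left : (fun p' => M p' q) =ᶠ[𝓝 p] fun p' => φ (diagnosticOddsRatio p' q) :=
    (Continuous.prodMk_left q).continuousAt.eventually hM
  have hM_right : (fun q' => M p q') =ᶠ[𝓝 q] fun q' => φ (diagnosticOddsRatio p q') :=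
    (Continuous.prodMk_right p).continuousAt.eventually hM
  have hderiv_left : deriv (fun p' => M p' q) p = φ' * (1 / (1 - p) ^ 2 * (q / (1 - q))) :=
    ((hφ.comp p (hasDerivAt_diagnosticOddsRatio_left hp q)).congr_of_eventuallyEq hM_left).deriv
  have hderiv_right : deriv (fun q' => M p q') q = φ' * (1 / (1 - q) ^ 2 * (p / (1 - p))) :=
    ((hφ.comp q (hasDerivAt_diagnosticOddsRatio_right p hq)).congr_of_eventuallyEq hM_right).deriv
  have hp' : 1 - p ≠ 0 := sub_ne_zero.mpr hp.symm
  have hq' : 1 - q ≠ 0 := sub_ne_zero.mpr hq.symm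
  rw [hderiv_left, hderiv_right, mul_div_mul_left _ _ hφ']
  field_simp

end OddsRatio

section Yule

/-- Yule's coefficient of colligation `M_Y`, without the argument `π` on which it does not
depend. -/
noncomputable def yuleColligation (p q : ℝ) : ℝ :=
  (√(p * q) - √((1 - p) * (1 - q))) / (√(p * q) + √((1 - p) * (1 - q)))

/-- Yule's coefficient of association `M_Q`, without the argument `π` on which it does not
depend. -/
noncomputable def yuleAssociation (p q : ℝ) : ℝ :=
  (p * q - (1 - p) * (1 - q)) / (p * q + (1 - p) * (1 - q))

variable {p q : ℝ}

theorem yuleAssociation_eq (hp : p ≠ 1) (hq : q ≠ 1) :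
    yuleAssociation p q = (diagnosticOddsRatio p q - 1) / (diagnosticOddsRatio p q + 1) := by
  rw [yuleAssociation, diagnosticOddsRatio_eq_div, sub_div_add_eq_div_sub_one_div_div_add_one]
  exact mul_ne_zero (sub_ne_zero.mpr hp.symm) (sub_ne_zero.mpr hq.symm)

theorem yuleColligation_eq (h : 0 < (1 - p) * (1 - q)) :
    yuleColligation p q =
      (√(diagnosticOddsRatio p q) - 1) / (√(diagnosticOddsRatio p q) + 1) := by
  rw [yuleColligation, diagnosticOddsRatio_eq_div, Real.sqrt_div' _ h.le,
    sub_div_add_eq_div_sub_one_div_div_add_one _ (Real.sqrt_pos.mpr h).ne']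

theorem deriv_yuleAssociation_div_deriv (hp : p ≠ 1) (hq : q ≠ 1)
    (hω : diagnosticOddsRatio p q + 1 ≠ 0) :
    deriv (fun q' => yuleAssociation p q') q / deriv (fun p' => yuleAssociation p' q) p =
      p * (1 - p) / (q * (1 - q)) := by
  have hM : ∀ᶠ x : ℝ × ℝ in 𝓝 (p, q), yuleAssociation x.1 x.2 =
      (diagnosticOddsRatio x.1 x.2 - 1) / (diagnosticOddsRatio x.1 x.2 + 1) := by
    filter_upwards [continuousAt_fst.eventually_ne hp, continuousAt_snd.eventually_ne hq]
      with x hx₁ hx₂ using yuleAssociation_eq hx₁ hx₂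
  exact deriv_div_deriv_of_eventuallyEq_comp_diagnosticOddsRatio hp hq hM
    (hasDerivAt_sub_one_div_add_one hω) (by positivity)

theorem deriv_yuleColligation_div_deriv (hpq : 0 < p * q) (hpq' : 0 < (1 - p) * (1 - q)) :
    deriv (fun q' => yuleColligation p q') q / deriv (fun p' => yuleColligation p' q) p =
      p * (1 - p) / (q * (1 - q)) := by
  obtain ⟨hp, hq⟩ := ne_one_and_ne_one_of_one_sub_mul_one_sub_ne_zero hpq'.ne'
  have hω := diagnosticOddsRatio_pos hpq hpq'
  have hM : ∀ᶠ x : ℝ × ℝ in 𝓝 (p, q), yuleColligation x.1 x.2 =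
      (√(diagnosticOddsRatio x.1 x.2) - 1) / (√(diagnosticOddsRatio x.1 x.2) + 1) := by
    have hcont : ContinuousAt (fun x : ℝ × ℝ => (1 - x.1) * (1 - x.2)) (p, q) := by fun_prop
    filter_upwards [hcont.eventually_const_lt hpq'] with x hx using yuleColligation_eq hx
  have hφ : HasDerivAt (fun ω : ℝ => (√ω - 1) / (√ω + 1))
      (2 / (√(diagnosticOddsRatio p q) + 1) ^ 2 * (1 / (2 * √(diagnosticOddsRatio p q))))
      (diagnosticOddsRatio p q) :=
    (hasDerivAt_sub_one_div_add_one (by positivity)).comp _ (Real.hasDerivAt_sqrt hω.ne')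
  exact deriv_div_deriv_of_eventuallyEq_comp_diagnosticOddsRatio hp hq hM hφ (by positivity)

end Yule

theorem yule_Y_partial_ratio_general
    (MY MQ : ℝ → ℝ → ℝ → ℝ)
    (hMY : ∀ p q π : ℝ, MY p q π =
      (Real.sqrt (p * q) - Real.sqrt ((1 - p) * (1 - q))) /
      (Real.sqrt (p * q) + Real.sqrt ((1 - p) * (1 - q))))
    (hMQ : ∀ p q π : ℝ, MQ p q π =
      (p * q - (1 - p) * (1 - q)) / (p * q + (1 - p) * (1 - q)))
    (p q π : ℝ) (hpq : 0 < p * q) (hpq' : 0 < (1 - p) * (1 - q)) :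
    deriv (fun q' => MY p q' π) q / deriv (fun p' => MY p' q π) p
        = p * (1 - p) / (q * (1 - q)) ∧
    deriv (fun q' => MY p q' π) q / deriv (fun p' => MY p' q π) p
        = deriv (fun q' => MQ p q' π) q / deriv (fun p' => MQ p' q π) p := by
  obtain rfl : MY = fun p q _ => yuleColligation p q := by
    funext p q π
    exact hMY p q π
  obtain rfl : MQ = fun p q _ => yuleAssociation p q := by
    funext p q π
    exact hMQ p q π
  have hY := deriv_yuleColligation_div_deriv hpq hpq'
  obtain ⟨hp, hq⟩ := ne_one_and_ne_one_of_one_sub_mul_one_sub_ne_zero hpq'.ne'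
  have hQ := deriv_yuleAssociation_div_deriv hp hq
    (add_pos (diagnosticOddsRatio_pos hpq hpq') one_pos).ne'
  exact ⟨hY, hY.trans hQ.symm⟩

theorem yule_Y_partial_ratio
    (MY MQ : ℝ → ℝ → ℝ → ℝ)
    (hMY : ∀ p q π : ℝ, MY p q π =
      (Real.sqrt (p * q) - Real.sqrt ((1 - p) * (1 - q))) /
      (Real.sqrt (p * q) + Real.sqrt ((1 - p) * (1 - q))))
    (hMQ : ∀ p q π : ℝ, MQ p q π =
      (p * q - (1 - p) * (1 - q)) / (p * q + (1 - p) * (1 - q))) :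
    ∀ p q π : ℝ, p ∈ Ioo (0:ℝ) 1 → q ∈ Ioo (0:ℝ) 1 →
      deriv (fun q' => MY p q' π) q / deriv (fun p' => MY p' q π) p
          = p * (1 - p) / (q * (1 - q)) ∧
      deriv (fun q' => MY p q' π) q / deriv (fun p' => MY p' q π) p
          = deriv (fun q' => MQ p q' π) q / deriv (fun p' => MQ p' q π) p :=
  fun p q π hp hq => yule_Y_partial_ratio_general MY MQ hMY hMQ p q π (mul_pos hp.1 hq.1)
    (mul_pos (sub_pos.mpr hp.2) (sub_pos.mpr hq.2))
end

section
/- Fix β > 0 and let M_{F_β}(p,q,π) = (1+β²) π p / (β² π + π p + (1−q)(1−π)) (the F_β-score). Then for all p, q, π ∈ (0,1), the ratio of partial derivatives satisfies ∂_q M_{F_β}(p,q,π) / ∂_p M_{F_β}(p,q,π) = p(1−π) / (β² π + (1−q)(1−π)). In particular, for β = 1 this ratio coincides with the corresponding ratio for the Jaccard similarity coefficient M_JAC(p,q,π) = πp / (1 − q(1−π)). -/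
open Set

/-!
At fixed `π`, both scores have the form `c * p / (a * p + e q)` with `e` affine. By the quotient
rule both partial derivatives carry the same factor `c / (a * p + e q) ^ 2`, so their ratio is
`-(p * e' q) / e q`, in which `a` and `c` no longer appear. For `β = 1` the `F_β`-score and the
Jaccard coefficient share the same `e`, the former with `a = π`, the latter with `a = 0`.
-/

section Scores

variable {𝕜 : Type*} [Field 𝕜]

/-- The `F_β`-score as a function of the sensitivity `p`, the specificity `q` and the proportion `π`
of the positive class. -/
def fBetaScore (β p q π : 𝕜) : 𝕜 :=
  (1 + β ^ 2) * π * p / (β ^ 2 * π + π * p + (1 - q) * (1 - π))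

/-- The Jaccard similarity coefficient as a function of the sensitivity `p`, the specificity `q` and
the proportion `π` of the positive class. -/
def jaccardIndex (p q π : 𝕜) : 𝕜 :=
  π * p / (1 - q * (1 - π))

theorem fBetaScore_eq_div_add (β p q π : 𝕜) :
    fBetaScore β p q π =
      (1 + β ^ 2) * π * p / (π * p + (β ^ 2 * π + (1 - q) * (1 - π))) := by
  rw [fBetaScore, add_left_comm, add_assoc]

end Scores

section PartialDerivatives

variable {𝕜 : Type*} [NontriviallyNormedField 𝕜]

/-- The ratio `∂_q f / ∂_p f` of the partial derivatives of `f` at `(p, q)`; like the derivatives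
themselves it is only meaningful where both exist and `∂_p f` does not vanish. -/
noncomputable def partialDerivRatio (f : 𝕜 → 𝕜 → 𝕜) (p q : 𝕜) : 𝕜 :=
  deriv (fun y => f p y) q / deriv (fun x => f x q) p

theorem hasDerivAt_mul_div_mul_add {a e x : 𝕜} (c : 𝕜) (h : a * x + e ≠ 0) :
    HasDerivAt (fun x => c * x / (a * x + e)) (c * e / (a * x + e) ^ 2) x := by
  have numerator := (hasDerivAt_id' x).const_mul c
  have denominator := ((hasDerivAt_id' x).const_mul a).add_const e
  exact (numerator.fun_div denominator h).congr_deriv (by ring)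

theorem hasDerivAt_const_div_const_add {e : 𝕜 → 𝕜} {a e' y : 𝕜} (b : 𝕜)
    (he : HasDerivAt e e' y) (h : a + e y ≠ 0) :
    HasDerivAt (fun y => b / (a + e y)) (-(b * e') / (a + e y) ^ 2) y :=
  ((hasDerivAt_const y b).fun_div (he.const_add a) h).congr_deriv (by ring)

theorem partialDerivRatio_mul_div_mul_add {e : 𝕜 → 𝕜} {a c e' p q : 𝕜} (hc : c ≠ 0)
    (he : HasDerivAt e e' q) (h : a * p + e q ≠ 0) :
    partialDerivRatio (fun x y => c * x / (a * x + e y)) p q = -(p * e') / e q := by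
  rw [partialDerivRatio, (hasDerivAt_const_div_const_add (c * p) he h).deriv,
    (hasDerivAt_mul_div_mul_add c h).deriv, div_div_div_cancel_right₀ (pow_ne_zero 2 h),
    mul_assoc, ← mul_neg, mul_div_mul_left _ _ hc]

theorem hasDerivAt_add_one_sub_mul (a b q : 𝕜) :
    HasDerivAt (fun y => a + (1 - y) * b) (-b) q :=
  ((((hasDerivAt_id' q).const_sub 1).mul_const b).const_add a).congr_deriv (neg_one_mul b)

theorem partialDerivRatio_fBetaScore {β p q π : 𝕜} (hβ : 1 + β ^ 2 ≠ 0) (hπ : π ≠ 0)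
    (h : π * p + (β ^ 2 * π + (1 - q) * (1 - π)) ≠ 0) :
    partialDerivRatio (fun x y => fBetaScore β x y π) p q =
      p * (1 - π) / (β ^ 2 * π + (1 - q) * (1 - π)) := by
  simp only [fBetaScore_eq_div_add]
  rw [partialDerivRatio_mul_div_mul_add (mul_ne_zero hβ hπ) (hasDerivAt_add_one_sub_mul _ _ q) h,
    mul_neg, neg_neg]

theorem partialDerivRatio_jaccardIndex {q π : 𝕜} (p : 𝕜) (hπ : π ≠ 0)
    (h : 1 - q * (1 - π) ≠ 0) :
    partialDerivRatio (fun x y => jaccardIndex x y π) p q = p * (1 - π) / (1 - q * (1 - π)) := by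
  have he : HasDerivAt (fun y => 1 - y * (1 - π)) (-(1 - π)) q :=
    (((hasDerivAt_id' q).mul_const (1 - π)).const_sub 1).congr_deriv (by rw [one_mul])
  simpa [jaccardIndex, -neg_sub] using
    partialDerivRatio_mul_div_mul_add (a := 0) (p := p) hπ he (by simpa)

theorem fbeta_partial_ratio_general {β p q π : 𝕜} (hβ : 1 + β ^ 2 ≠ 0) (hπ : π ≠ 0)
    (he : β ^ 2 * π + (1 - q) * (1 - π) ≠ 0)
    (h : π * p + (β ^ 2 * π + (1 - q) * (1 - π)) ≠ 0) :
    partialDerivRatio (fun x y => fBetaScore β x y π) p q =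
        p * (1 - π) / (β ^ 2 * π + (1 - q) * (1 - π)) ∧
      (β = 1 → partialDerivRatio (fun x y => fBetaScore β x y π) p q =
        partialDerivRatio (fun x y => jaccardIndex x y π) p q) := by
  refine ⟨partialDerivRatio_fBetaScore hβ hπ h, ?_⟩
  rintro rfl
  have same_offset : 1 ^ 2 * π + (1 - q) * (1 - π) = 1 - q * (1 - π) := by ring
  rw [partialDerivRatio_fBetaScore hβ hπ h,
    partialDerivRatio_jaccardIndex p hπ (same_offset ▸ he), same_offset]

end PartialDerivatives

theorem fbeta_partial_ratio
    (β : ℝ) (hβ : 0 < β)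
    (MF : ℝ → ℝ → ℝ → ℝ)
    (hMF : ∀ p q π : ℝ, MF p q π =
      (1 + β ^ 2) * π * p / (β ^ 2 * π + π * p + (1 - q) * (1 - π)))
    (MJAC : ℝ → ℝ → ℝ → ℝ)
    (hMJAC : ∀ p q π : ℝ, MJAC p q π = π * p / (1 - q * (1 - π))) :
    ∀ p q π : ℝ, p ∈ Ioo (0:ℝ) 1 → q ∈ Ioo (0:ℝ) 1 → π ∈ Ioo (0:ℝ) 1 →
      deriv (fun q' => MF p q' π) q / deriv (fun p' => MF p' q π) p
          = p * (1 - π) / (β ^ 2 * π + (1 - q) * (1 - π)) ∧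
      (β = 1 →
        deriv (fun q' => MF p q' π) q / deriv (fun p' => MF p' q π) p
          = deriv (fun q' => MJAC p q' π) q / deriv (fun p' => MJAC p' q π) p) := by
  obtain rfl : MF = fBetaScore β := by ext; apply hMF
  obtain rfl : MJAC = jaccardIndex := by ext; apply hMJAC
  rintro p q π ⟨hp, -⟩ ⟨-, hq⟩ ⟨hπ, hπ1⟩
  have he : 0 < β ^ 2 * π + (1 - q) * (1 - π) :=
    add_pos (by positivity) (mul_pos (sub_pos.2 hq) (sub_pos.2 hπ1))
  exact fbeta_partial_ratio_general (by positivity) hπ.ne' he.ne' (by positivity)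
end

section
/- Let M_κ(p,q,π) = 2π(1−π)(p+q−1) / (2π(1−π)(p+q−1) − πp − (1−π)q + 1) (Cohen's kappa). Then for all p, q, π ∈ (0,1), the ratio of partial derivatives satisfies ∂_q M_κ(p,q,π) / ∂_p M_κ(p,q,π) = (p + π(1−2p)) / (1 − q − π(1−2q)). -/
open Set

/-!
The denominator of `κ` is the probability that prediction and truth disagree when they are drawn
independently with their true marginals. It is affine in `p` and in `q`, as is the numerator, so
the numerator of each partial derivative is free of the variable of differentiation, and the squared
denominators cancel in the ratio. Only `∂κ/∂p` has to be computed, because exchanging the two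
classes, that is `(p, q, π) ↦ (q, p, 1 - π)`, leaves `κ` unchanged.
-/

section Agreement

variable {R : Type*} [CommRing R]

/-- The probability that two independent Bernoulli variables with parameters `a` and `b` take the
same value. Up to a common factor, the partial derivatives of Cohen's kappa are of this form. -/
def bernoulliAgreement (a b : R) : R :=
  a * b + (1 - a) * (1 - b)

theorem bernoulliAgreement_eq (a b : R) :
    bernoulliAgreement a b = 1 - a - b * (1 - 2 * a) := by
  unfold bernoulliAgreement
  ring

theorem bernoulliAgreement_one_sub_right (a b : R) :
    bernoulliAgreement a (1 - b) = a + b * (1 - 2 * a) := by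
  unfold bernoulliAgreement
  ring

/-- The denominator of Cohen's kappa at sensitivity `p`, specificity `q` and prevalence `π`: the
probability that the predicted class differs from an independent draw of the true class. -/
def chanceDisagreement (p q π : R) : R :=
  2 * π * (1 - π) * (p + q - 1) - π * p - (1 - π) * q + 1

theorem chanceDisagreement_swap (p q π : R) :
    chanceDisagreement q p (1 - π) = chanceDisagreement p q π := by
  unfold chanceDisagreement
  ring

theorem chanceDisagreement_eq_bernoulliAgreement (p q π : R) :
    chanceDisagreement p q π =
      π * bernoulliAgreement p (1 - π) + (1 - π) * bernoulliAgreement q π := by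
  unfold chanceDisagreement bernoulliAgreement
  ring

variable [LinearOrder R] [IsStrictOrderedRing R]

theorem bernoulliAgreement_pos {a b : R} (ha : a ∈ Icc 0 1) (hb : b ∈ Ioo 0 1) :
    0 < bernoulliAgreement a b :=
  convex_Ioi (0 : R) hb.1 (sub_pos.2 hb.2) ha.1 (sub_nonneg.2 ha.2) (add_sub_cancel a 1)

theorem chanceDisagreement_pos {p q π : R} (hp : p ∈ Icc 0 1) (hq : q ∈ Icc 0 1)
    (hπ : π ∈ Ioo 0 1) : 0 < chanceDisagreement p q π := by
  have hπ' : 1 - π ∈ Ioo 0 1 := ⟨sub_pos.2 hπ.2, sub_lt_self 1 hπ.1⟩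
  rw [chanceDisagreement_eq_bernoulliAgreement]
  exact add_pos (mul_pos hπ.1 (bernoulliAgreement_pos hp hπ'))
    (mul_pos hπ'.1 (bernoulliAgreement_pos hq hπ))

end Agreement

/-- Cohen's kappa of a binary classifier with sensitivity `p` and specificity `q`, when the positive
class has proportion `π`. By the convention `x / 0 = 0` it is `0` where the denominator vanishes. -/
def cohenKappa {K : Type*} [Field K] (p q π : K) : K :=
  2 * π * (1 - π) * (p + q - 1) / chanceDisagreement p q π

theorem cohenKappa_swap {K : Type*} [Field K] (p q π : K) :
    cohenKappa q p (1 - π) = cohenKappa p q π := by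
  unfold cohenKappa
  rw [chanceDisagreement_swap]
  ring

section Deriv

variable {𝕜 : Type*} [NontriviallyNormedField 𝕜] {p q π : 𝕜}

theorem hasDerivAt_cohenKappa_sensitivity (hD : chanceDisagreement p q π ≠ 0) :
    HasDerivAt (fun p' => cohenKappa p' q π)
      (2 * π * (1 - π) * bernoulliAgreement q π / chanceDisagreement p q π ^ 2) p := by
  have hnum : HasDerivAt (fun p' => 2 * π * (1 - π) * (p' + q - 1)) (2 * π * (1 - π)) p := by
    simpa using (((hasDerivAt_id p).add_const q).sub_const 1).const_mul (2 * π * (1 - π))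
  have hden : HasDerivAt (fun p' => chanceDisagreement p' q π) (2 * π * (1 - π) - π) p := by
    simpa [chanceDisagreement] using
      ((hnum.sub ((hasDerivAt_id p).const_mul π)).sub_const ((1 - π) * q)).add_const 1
  refine (hnum.div hden hD).congr_deriv ?_
  congr 1
  unfold chanceDisagreement bernoulliAgreement
  ring

theorem hasDerivAt_cohenKappa_specificity (hD : chanceDisagreement p q π ≠ 0) :
    HasDerivAt (fun q' => cohenKappa p q' π)
      (2 * π * (1 - π) * bernoulliAgreement p (1 - π) / chanceDisagreement p q π ^ 2) q := by
  rw [← chanceDisagreement_swap] at hD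
  have h := hasDerivAt_cohenKappa_sensitivity hD
  simp only [cohenKappa_swap, chanceDisagreement_swap] at h
  exact h.congr_deriv (by ring)

theorem kappa_partial_ratio_general (hπ : 2 * π * (1 - π) ≠ 0)
    (hD : chanceDisagreement p q π ≠ 0) (hq : 1 - q - π * (1 - 2 * q) ≠ 0) :
    deriv (fun q' => cohenKappa p q' π) q / deriv (fun p' => cohenKappa p' q π) p
      = (p + π * (1 - 2 * p)) / (1 - q - π * (1 - 2 * q)) := by
  have hderiv_ne : 2 * π * (1 - π) * (1 - q - π * (1 - 2 * q)) / chanceDisagreement p q π ^ 2 ≠ 0 :=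
    div_ne_zero (mul_ne_zero hπ hq) (pow_ne_zero 2 hD)
  rw [(hasDerivAt_cohenKappa_specificity hD).deriv, (hasDerivAt_cohenKappa_sensitivity hD).deriv,
    bernoulliAgreement_one_sub_right, bernoulliAgreement_eq, div_eq_div_iff hderiv_ne hq]
  ring

end Deriv

theorem kappa_partial_ratio
    (M : ℝ → ℝ → ℝ → ℝ)
    (hM : ∀ p q π : ℝ, M p q π =
      2 * π * (1 - π) * (p + q - 1) /
      (2 * π * (1 - π) * (p + q - 1) - π * p - (1 - π) * q + 1)) :
    ∀ p q π : ℝ, p ∈ Ioo (0:ℝ) 1 → q ∈ Ioo (0:ℝ) 1 → π ∈ Ioo (0:ℝ) 1 →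
      deriv (fun q' => M p q' π) q / deriv (fun p' => M p' q π) p
        = (p + π * (1 - 2 * p)) / (1 - q - π * (1 - 2 * q)) := by
  intro p q π hp hq hπ
  obtain rfl : M = cohenKappa := funext₃ hM
  have hD := chanceDisagreement_pos (Ioo_subset_Icc_self hp) (Ioo_subset_Icc_self hq) hπ
  have hE := bernoulliAgreement_pos (Ioo_subset_Icc_self hq) hπ
  rw [bernoulliAgreement_eq] at hE
  have hπ' : 2 * π * (1 - π) ≠ 0 := (mul_pos (mul_pos two_pos hπ.1) (sub_pos.2 hπ.2)).ne'
  exact kappa_partial_ratio_general hπ' hD.ne' hE.ne'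
end

section
/- Let Σ be a symmetric positive definite n×n real matrix, μ₀ ≠ μ₁ ∈ ℝⁿ, let P_i be the multivariate normal measure on ℝⁿ with density f_i(x) = (2π)^{−n/2}(det Σ)^{−1/2} exp(−(x−μ_i)ᵀΣ⁻¹(x−μ_i)/2) with respect to Lebesgue measure, and set Δ = ((μ₁−μ₀)ᵀ Σ⁻¹ (μ₁−μ₀))^{1/2} > 0. Then for every δ > 0, the specificity and sensitivity of the density-ratio threshold classifier φ_δ(x) = 1(f₁(x)/f₀(x) > δ) satisfy P₀({x : f₁(x)/f₀(x) ≤ δ}) = Φ((log δ + Δ²/2)/Δ) and P₁({x : f₁(x)/f₀(x) > δ}) = Φ((−log δ + Δ²/2)/Δ), where Φ is the cumulative distribution function of the standard normal distribution N(0,1). -/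
open Matrix MeasureTheory Set

/-!
The log-likelihood ratio of two normal laws with a common covariance matrix is an affine function
of the observation, so it is itself normally distributed, with law `N(-Δ²/2, Δ²)` under `P₀` and
`N(Δ²/2, Δ²)` under `P₁`. Specificity and sensitivity are tails of these two laws at `log δ`.
-/

open ProbabilityTheory Real WithLp

section WithDensity

theorem pi_withDensity_ofReal {ι : Type*} [Fintype ι] {α : ι → Type*}
    [∀ i, MeasurableSpace (α i)] {μ : ∀ i, Measure (α i)} [∀ i, SigmaFinite (μ i)]
    {f : ∀ i, α i → ℝ} (hf : ∀ i, Integrable (f i) (μ i)) (hf_nonneg : ∀ i x, 0 ≤ f i x) :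
    Measure.pi (fun i ↦ (μ i).withDensity fun x ↦ ENNReal.ofReal (f i x)) =
      (Measure.pi μ).withDensity fun x ↦ ENNReal.ofReal (∏ i, f i (x i)) := by
  have : ∀ i, SigmaFinite ((μ i).withDensity fun x ↦ ENNReal.ofReal (f i x)) := fun i ↦
    SigmaFinite.withDensity_of_ne_top' fun _ ↦ ENNReal.ofReal_ne_top
  refine Measure.pi_eq fun s hs ↦ ?_
  have hint : ∀ i, Integrable (f i) ((μ i).restrict (s i)) := fun i ↦ (hf i).integrableOn
  calc (Measure.pi μ).withDensity (fun x ↦ ENNReal.ofReal (∏ i, f i (x i))) (Set.pi univ s)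
      = ∫⁻ x, ENNReal.ofReal (∏ i, f i (x i)) ∂Measure.pi fun i ↦ (μ i).restrict (s i) := by
        rw [withDensity_apply _ (.univ_pi hs), Measure.restrict_pi_pi]
    _ = ENNReal.ofReal (∏ i, ∫ x in s i, f i x ∂μ i) := by
        rw [← integral_fintype_prod_eq_prod, ofReal_integral_eq_lintegral_ofReal
          (Integrable.fintype_prod_dep hint)
          (.of_forall fun x ↦ Finset.prod_nonneg fun i _ ↦ hf_nonneg i (x i))]
    _ = ∏ i, (μ i).withDensity (fun x ↦ ENNReal.ofReal (f i x)) (s i) := by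
        rw [ENNReal.ofReal_prod_of_nonneg fun i _ ↦ integral_nonneg (hf_nonneg i)]
        refine Finset.prod_congr rfl fun i _ ↦ ?_
        rw [withDensity_apply _ (hs i), ofReal_integral_eq_lintegral_ofReal (hint i)
          (.of_forall (hf_nonneg i))]

theorem map_withDensity_comp {α β : Type*} [MeasurableSpace α] [MeasurableSpace β]
    {μ : Measure α} {g : α → β} (hg : Measurable g) {f : β → ENNReal} (hf : Measurable f) :
    (μ.withDensity fun x ↦ f (g x)).map g = (μ.map g).withDensity f := by
  ext s hs
  rw [Measure.map_apply hg hs, withDensity_apply _ (hg hs), withDensity_apply _ hs,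
    setLIntegral_map hs hf hg]

end WithDensity

section GaussianTails

variable {σ : ℝ}

theorem hasLaw_sub_div_gaussianReal (m : ℝ) (hσ : σ ≠ 0) :
    HasLaw (fun x ↦ (x - m) / σ) (gaussianReal 0 1) (gaussianReal m (σ ^ 2).toNNReal) := by
  have h := gaussianReal_div_const (gaussianReal_sub_const
    (HasLaw.id (μ := gaussianReal m (σ ^ 2).toNNReal)) m) σ
  have hvar : (σ ^ 2).toNNReal / .mk (σ ^ 2) (sq_nonneg σ) = 1 := by
    rw [Real.toNNReal_of_nonneg (sq_nonneg σ)]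
    exact div_self (by simpa [← NNReal.coe_ne_zero] using hσ)
  simpa only [sub_self, zero_div, hvar, id] using h

theorem gaussianReal_real_Iic (m t : ℝ) (hσ : 0 < σ) :
    (gaussianReal m (σ ^ 2).toNNReal).real (Iic t) = cdf (gaussianReal 0 1) ((t - m) / σ) := by
  have hpre : Iic t = (fun x ↦ (x - m) / σ) ⁻¹' Iic ((t - m) / σ) := by
    ext x
    simp [div_le_div_iff_of_pos_right hσ]
  rw [cdf_eq_real, ← (hasLaw_sub_div_gaussianReal m hσ.ne').map_eq,
    map_measureReal_apply (by fun_prop) measurableSet_Iic, hpre]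

theorem gaussianReal_real_Ioi (m t : ℝ) (hσ : 0 < σ) :
    (gaussianReal m (σ ^ 2).toNNReal).real (Ioi t) = cdf (gaussianReal 0 1) ((m - t) / σ) := by
  have : NullSingletonClass (gaussianReal m (σ ^ 2).toNNReal) :=
    nullSingletonClass_gaussianReal (by simpa using hσ.ne')
  have hneg : Ici t = (fun x ↦ -x) ⁻¹' Iic (-t) := by simp
  rw [measureReal_congr Ioi_ae_eq_Ici, hneg, ← map_measureReal_apply measurable_neg
    measurableSet_Iic, gaussianReal_map_neg, gaussianReal_real_Iic _ _ hσ, neg_sub_neg]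

end GaussianTails

section NormalLaw

variable {ι : Type*} [Fintype ι] [DecidableEq ι]

/-- The density of the normal law `N(μ, S)` on `ι → ℝ` with respect to Lebesgue measure, for
positive definite `S`. -/
noncomputable def multivariateGaussianPDFReal (μ : ι → ℝ) (S : Matrix ι ι ℝ) (x : ι → ℝ) : ℝ :=
  (2 * π) ^ (-(Fintype.card ι : ℝ) / 2) * S.det ^ (-(1 : ℝ) / 2) *
    exp (-((x - μ) ⬝ᵥ (S⁻¹ *ᵥ (x - μ))) / 2)

theorem continuous_multivariateGaussianPDFReal (μ : ι → ℝ) (S : Matrix ι ι ℝ) :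
    Continuous (multivariateGaussianPDFReal μ S) := by
  have : Continuous fun x : ι → ℝ ↦ (x - μ) ⬝ᵥ (S⁻¹ *ᵥ (x - μ)) :=
    .dotProduct (by fun_prop) (.matrix_mulVec continuous_const (by fun_prop))
  unfold multivariateGaussianPDFReal
  fun_prop

theorem prod_gaussianPDFReal (z : ι → ℝ) :
    ∏ i, gaussianPDFReal 0 1 (z i) = multivariateGaussianPDFReal 0 1 z := by
  have hconst : (√(2 * π))⁻¹ ^ Fintype.card ι = (2 * π) ^ (-(Fintype.card ι : ℝ) / 2) := by
    rw [Real.sqrt_eq_rpow, ← Real.rpow_neg (by positivity), ← Real.rpow_natCast,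
      ← Real.rpow_mul (by positivity)]
    ring_nf
  simp only [gaussianPDFReal_def, multivariateGaussianPDFReal, NNReal.coe_one, mul_one, sub_zero,
    Finset.prod_mul_distrib, ← Real.exp_sum, Finset.prod_const, Finset.card_univ, hconst,
    det_one, Real.one_rpow, inv_one, one_mulVec, dotProduct, ← Finset.sum_div,
    Finset.sum_neg_distrib, sq]

theorem pi_gaussianReal_eq_withDensity :
    Measure.pi (fun _ : ι ↦ gaussianReal 0 1) =
      volume.withDensity fun z ↦ ENNReal.ofReal (multivariateGaussianPDFReal 0 1 z) := by
  simp only [gaussianReal_of_var_ne_zero 0 one_ne_zero, gaussianPDF_def,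
    ← prod_gaussianPDFReal]
  exact pi_withDensity_ofReal (fun _ ↦ integrable_gaussianPDFReal 0 1)
    fun _ ↦ gaussianPDFReal_nonneg 0 1

theorem map_affine_volume_pi {A : Matrix ι ι ℝ} (hA : A.det ≠ 0) (b : ι → ℝ) :
    (volume : Measure (ι → ℝ)).map (fun z ↦ b + A *ᵥ z) = ENNReal.ofReal |A.det⁻¹| • volume := by
  have hA_meas : Measurable (toLin' A) := (toLin' A).continuous_of_finiteDimensional.measurable
  rw [← map_add_left_eq_self volume b, ← Measure.map_smul,
    ← Real.map_matrix_volume_pi_eq_smul_volume_pi hA,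
    Measure.map_map (measurable_const_add b) hA_meas, map_add_left_eq_self]
  rfl

theorem multivariateGaussianPDFReal_one_eq_mul {A S : Matrix ι ι ℝ} (hA : A.det ≠ 0)
    (hAS : A * Aᵀ = S) (μ z : ι → ℝ) :
    multivariateGaussianPDFReal 0 1 z = |A.det| * multivariateGaussianPDFReal μ S (μ + A *ᵥ z) := by
  have hdet : S.det ^ (-(1 : ℝ) / 2) = |A.det|⁻¹ := by
    rw [← hAS, det_mul, det_transpose, ← sq, ← sq_abs, neg_div, Real.rpow_neg (sq_nonneg _),
      ← Real.sqrt_eq_rpow, Real.sqrt_sq (abs_nonneg _)]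
  have hquad : (A *ᵥ z) ⬝ᵥ (S⁻¹ *ᵥ (A *ᵥ z)) = z ⬝ᵥ z := by
    have hSA : S⁻¹ * A = Aᵀ⁻¹ := by
      rw [← hAS, Matrix.mul_inv_rev, Matrix.mul_assoc, nonsing_inv_mul _ hA.isUnit, Matrix.mul_one]
    rw [mulVec_mulVec, hSA, ← vecMul_transpose, ← dotProduct_mulVec, mulVec_mulVec,
      mul_nonsing_inv _ (by simpa using hA), one_mulVec]
  simp only [multivariateGaussianPDFReal, add_sub_cancel_left, hquad, hdet, sub_zero, det_one,
    Real.one_rpow, inv_one, one_mulVec, mul_one]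
  field_simp [abs_ne_zero.2 hA]

theorem map_affine_pi_gaussianReal {A S : Matrix ι ι ℝ} (hA : A.det ≠ 0) (hAS : A * Aᵀ = S)
    (μ : ι → ℝ) :
    (Measure.pi fun _ : ι ↦ gaussianReal 0 1).map (fun z ↦ μ + A *ᵥ z) =
      volume.withDensity fun x ↦ ENNReal.ofReal (multivariateGaussianPDFReal μ S x) := by
  have hg : Measurable fun z : ι → ℝ ↦ μ + A *ᵥ z :=
    (continuous_const.add (.matrix_mulVec continuous_const continuous_id)).measurable
  have hf : Measurable fun x ↦ ENNReal.ofReal (multivariateGaussianPDFReal μ S x) :=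
    (continuous_multivariateGaussianPDFReal μ S).measurable.ennreal_ofReal
  simp only [pi_gaussianReal_eq_withDensity, multivariateGaussianPDFReal_one_eq_mul hA hAS μ,
    ENNReal.ofReal_mul (abs_nonneg A.det)]
  calc (volume.withDensity (ENNReal.ofReal |A.det| •
          fun z ↦ ENNReal.ofReal (multivariateGaussianPDFReal μ S (μ + A *ᵥ z)))).map
            (fun z ↦ μ + A *ᵥ z)
      = ENNReal.ofReal |A.det| • ENNReal.ofReal |A.det⁻¹| •
          volume.withDensity fun x ↦ ENNReal.ofReal (multivariateGaussianPDFReal μ S x) := by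
        rw [withDensity_smul' _ _ ENNReal.ofReal_ne_top, Measure.map_smul,
          map_withDensity_comp hg hf, map_affine_volume_pi hA, withDensity_smul_measure]
    _ = volume.withDensity fun x ↦ ENNReal.ofReal (multivariateGaussianPDFReal μ S x) := by
        rw [smul_smul, ← ENNReal.ofReal_mul (abs_nonneg _), ← abs_mul, mul_inv_cancel₀ hA,
          abs_one, ENNReal.ofReal_one, one_smul]

theorem map_ofLp_multivariateGaussian {S : Matrix ι ι ℝ} (hS : S.PosDef)
    (μ : EuclideanSpace ℝ ι) :
    (multivariateGaussian μ S).map ofLp =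
      volume.withDensity fun x ↦ ENNReal.ofReal (multivariateGaussianPDFReal (ofLp μ) S x) := by
  open scoped MatrixOrder in
  have hsq : CFC.sqrt S * (CFC.sqrt S)ᵀ = S := by
    rw [← conjTranspose_eq_transpose_of_trivial, ← star_eq_conjTranspose,
      (CFC.sqrt_nonneg S).isSelfAdjoint.star_eq, CFC.sqrt_mul_sqrt_self S hS.posSemidef.nonneg]
  have hdet : (CFC.sqrt S).det ≠ 0 := fun h ↦
    hS.det_pos.ne' (by rw [← hsq, det_mul, h, zero_mul])
  rw [← map_affine_pi_gaussianReal hdet hsq, multivariateGaussian, ← map_pi_eq_stdGaussian,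
    Measure.map_map (by fun_prop) (by fun_prop), Measure.map_map (by fun_prop) (by fun_prop)]
  rfl

theorem hasLaw_dotProduct_multivariateGaussian {S : Matrix ι ι ℝ} (hS : S.PosSemidef)
    (μ : EuclideanSpace ℝ ι) (w : ι → ℝ) :
    HasLaw (fun x ↦ w ⬝ᵥ ofLp x) (gaussianReal (w ⬝ᵥ ofLp μ) (w ⬝ᵥ (S *ᵥ w)).toNNReal)
      (multivariateGaussian μ S) := by
  have hinner : (fun x : EuclideanSpace ℝ ι ↦ w ⬝ᵥ ofLp x) = innerSL ℝ (toLp 2 w) := by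
    ext x
    simp [EuclideanSpace.inner_eq_star_dotProduct, dotProduct_comm]
  have hmean : (multivariateGaussian μ S)[innerSL ℝ (toLp 2 w)] = w ⬝ᵥ ofLp μ := by
    rw [ContinuousLinearMap.integral_comp_id_comm IsGaussian.integrable_id,
      integral_id_multivariateGaussian, ← hinner]
  have hvar : Var[innerSL ℝ (toLp 2 w); multivariateGaussian μ S] = w ⬝ᵥ (S *ᵥ w) := by
    rw [← covarianceBilin_multivariateGaussian hS (toLp 2 w) (toLp 2 w),
      covarianceBilin_self IsGaussian.memLp_two_id]
    rfl
  refine ⟨by rw [hinner]; fun_prop, ?_⟩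
  rw [hinner, IsGaussian.map_eq_gaussianReal, hmean, hvar]

end NormalLaw

section QuadraticForm

variable {n : Type*} [Fintype n]

theorem dotProduct_mulVec_comm_of_isSymm {R : Type*} [CommSemiring R]
    {A : Matrix n n R} (hA : A.IsSymm) (v w : n → R) : v ⬝ᵥ (A *ᵥ w) = w ⬝ᵥ (A *ᵥ v) := by
  rw [dotProduct_mulVec, ← mulVec_transpose, hA.eq, dotProduct_comm]

theorem dotProduct_mulVec_add_sub_dotProduct_mulVec_sub {R : Type*} [CommRing R]
    {A : Matrix n n R} (hA : A.IsSymm) (v w : n → R) :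
    (v + w) ⬝ᵥ (A *ᵥ (v + w)) - (v - w) ⬝ᵥ (A *ᵥ (v - w)) = 4 * (v ⬝ᵥ (A *ᵥ w)) := by
  simp only [mulVec_add, mulVec_sub, dotProduct_add, dotProduct_sub, add_dotProduct,
    sub_dotProduct, dotProduct_mulVec_comm_of_isSymm hA w v]
  ring

end QuadraticForm

section Discriminant

variable {ι : Type*} [Fintype ι] [DecidableEq ι] {S : Matrix ι ι ℝ}

/-- The Mahalanobis distance between `μ₀` and `μ₁` relative to the covariance matrix `S`. -/
noncomputable def mahalanobisDist (S : Matrix ι ι ℝ) (μ₀ μ₁ : ι → ℝ) : ℝ :=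
  √((μ₁ - μ₀) ⬝ᵥ (S⁻¹ *ᵥ (μ₁ - μ₀)))

/-- Fisher's linear discriminant between the normal laws `N(μ₀, S)` and `N(μ₁, S)`, normalised
so that it is their log-likelihood ratio. -/
noncomputable def linearDiscriminant (S : Matrix ι ι ℝ) (μ₀ μ₁ x : ι → ℝ) : ℝ :=
  (S⁻¹ *ᵥ (μ₁ - μ₀)) ⬝ᵥ (x - midpoint ℝ μ₀ μ₁)

theorem sq_mahalanobisDist (hS : S.PosSemidef) (μ₀ μ₁ : ι → ℝ) :
    mahalanobisDist S μ₀ μ₁ ^ 2 = (μ₁ - μ₀) ⬝ᵥ (S⁻¹ *ᵥ (μ₁ - μ₀)) :=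
  Real.sq_sqrt (by simpa using hS.inv.dotProduct_mulVec_nonneg (μ₁ - μ₀))

theorem mahalanobisDist_pos (hS : S.PosDef) {μ₀ μ₁ : ι → ℝ} (hμ : μ₀ ≠ μ₁) :
    0 < mahalanobisDist S μ₀ μ₁ :=
  Real.sqrt_pos.2 (by simpa using hS.inv.dotProduct_mulVec_pos (sub_ne_zero.2 hμ.symm))

theorem linearDiscriminant_left (hS : S.PosSemidef) (μ₀ μ₁ : ι → ℝ) :
    linearDiscriminant S μ₀ μ₁ μ₀ = -(mahalanobisDist S μ₀ μ₁ ^ 2 / 2) := by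
  rw [linearDiscriminant, left_sub_midpoint, ← neg_sub μ₁ μ₀, smul_neg, dotProduct_neg,
    dotProduct_smul, dotProduct_comm, sq_mahalanobisDist hS, smul_eq_mul, invOf_eq_inv]
  ring

theorem linearDiscriminant_right (hS : S.PosSemidef) (μ₀ μ₁ : ι → ℝ) :
    linearDiscriminant S μ₀ μ₁ μ₁ = mahalanobisDist S μ₀ μ₁ ^ 2 / 2 := by
  rw [linearDiscriminant, right_sub_midpoint, dotProduct_smul, dotProduct_comm,
    sq_mahalanobisDist hS, smul_eq_mul, invOf_eq_inv]
  ring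

theorem multivariateGaussianPDFReal_div (hS : S.PosDef) (μ₀ μ₁ x : ι → ℝ) :
    multivariateGaussianPDFReal μ₁ S x / multivariateGaussianPDFReal μ₀ S x =
      exp (linearDiscriminant S μ₀ μ₁ x) := by
  have hconst : (2 * π) ^ (-(Fintype.card ι : ℝ) / 2) * S.det ^ (-(1 : ℝ) / 2) ≠ 0 :=
    (mul_pos (by positivity) (Real.rpow_pos_of_pos hS.det_pos _)).ne'
  rw [multivariateGaussianPDFReal, multivariateGaussianPDFReal, mul_div_mul_left _ _ hconst,
    ← Real.exp_sub, linearDiscriminant]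
  have hpolar := dotProduct_mulVec_add_sub_dotProduct_mulVec_sub
    (isHermitian_iff_isSymm.1 hS.inv.isHermitian) (x - midpoint ℝ μ₀ μ₁) ((2⁻¹ : ℝ) • (μ₁ - μ₀))
  have hleft : x - midpoint ℝ μ₀ μ₁ + (2⁻¹ : ℝ) • (μ₁ - μ₀) = x - μ₀ := by
    rw [← invOf_eq_inv, ← midpoint_sub_left, sub_add_sub_cancel]
  have hright : x - midpoint ℝ μ₀ μ₁ - (2⁻¹ : ℝ) • (μ₁ - μ₀) = x - μ₁ := by
    rw [← invOf_eq_inv, ← right_sub_midpoint, sub_sub_sub_cancel_right]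
  rw [hleft, hright, mulVec_smul, dotProduct_smul, smul_eq_mul,
    dotProduct_comm (x - midpoint ℝ μ₀ μ₁)] at hpolar
  congr 1
  linarith

theorem hasLaw_linearDiscriminant (hS : S.PosDef) (μ₀ μ₁ m : ι → ℝ) :
    HasLaw (linearDiscriminant S μ₀ μ₁)
      (gaussianReal (linearDiscriminant S μ₀ μ₁ m) (mahalanobisDist S μ₀ μ₁ ^ 2).toNNReal)
      (volume.withDensity fun x ↦ ENNReal.ofReal (multivariateGaussianPDFReal m S x)) := by
  set w := S⁻¹ *ᵥ (μ₁ - μ₀) with hw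
  have hvar : w ⬝ᵥ (S *ᵥ w) = mahalanobisDist S μ₀ μ₁ ^ 2 := by
    rw [sq_mahalanobisDist hS.posSemidef, hw, mulVec_mulVec,
      mul_nonsing_inv _ hS.det_pos.ne'.isUnit, one_mulVec, dotProduct_comm]
  have hlaw := gaussianReal_sub_const
    (hasLaw_dotProduct_multivariateGaussian hS.posSemidef (toLp 2 m) w) (w ⬝ᵥ midpoint ℝ μ₀ μ₁)
  rw [hvar] at hlaw
  simp only [← dotProduct_sub] at hlaw
  have hofLp : HasLaw ofLp
      (volume.withDensity fun x ↦ ENNReal.ofReal (multivariateGaussianPDFReal m S x))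
      (multivariateGaussian (toLp 2 m) S) :=
    ⟨by fun_prop, map_ofLp_multivariateGaussian hS (toLp 2 m)⟩
  have hcont : Continuous (linearDiscriminant S μ₀ μ₁) :=
    .dotProduct continuous_const (by fun_prop)
  exact hofLp.comp_of_hasLaw_comp hcont.aemeasurable .id hlaw

theorem lda_sensitivity_specificity_general (hS : S.PosDef) {μ₀ μ₁ : ι → ℝ} (hμ : μ₀ ≠ μ₁)
    {δ : ℝ} (hδ : 0 < δ) :
    let f (μ : ι → ℝ) := multivariateGaussianPDFReal μ S
    let P (μ : ι → ℝ) := volume.withDensity fun x ↦ ENNReal.ofReal (f μ x)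
    let Δ := mahalanobisDist S μ₀ μ₁
    (P μ₀).real {x | f μ₁ x / f μ₀ x ≤ δ} =
        cdf (gaussianReal 0 1) ((log δ + Δ ^ 2 / 2) / Δ) ∧
      (P μ₁).real {x | f μ₁ x / f μ₀ x > δ} =
        cdf (gaussianReal 0 1) ((-log δ + Δ ^ 2 / 2) / Δ) := by
  intro f P Δ
  have hΔ : 0 < Δ := mahalanobisDist_pos hS hμ
  simp only [f, multivariateGaussianPDFReal_div hS, gt_iff_lt, ← Real.le_log_iff_exp_le hδ,
    ← Real.log_lt_iff_lt_exp hδ]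
  constructor
  · rw [(hasLaw_linearDiscriminant hS μ₀ μ₁ μ₀).measureReal_eq measurableSet_Iic,
      linearDiscriminant_left hS.posSemidef]
    exact (gaussianReal_real_Iic _ _ hΔ).trans (by rw [sub_neg_eq_add])
  · rw [(hasLaw_linearDiscriminant hS μ₀ μ₁ μ₁).measureReal_eq measurableSet_Ioi,
      linearDiscriminant_right hS.posSemidef]
    exact (gaussianReal_real_Ioi _ _ hΔ).trans (by rw [neg_add_eq_sub])

end Discriminant

theorem lda_sensitivity_specificity
    {n : ℕ} (S : Matrix (Fin n) (Fin n) ℝ) (hS : S.PosDef)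
    (μ₀ μ₁ : Fin n → ℝ) (hμ : μ₀ ≠ μ₁)
    (f₀ f₁ : (Fin n → ℝ) → ℝ)
    (hf₀ : ∀ x, f₀ x = (2 * Real.pi) ^ (-(n : ℝ) / 2) * S.det ^ (-(1 : ℝ) / 2) *
      Real.exp (-((x - μ₀) ⬝ᵥ (S⁻¹ *ᵥ (x - μ₀))) / 2))
    (hf₁ : ∀ x, f₁ x = (2 * Real.pi) ^ (-(n : ℝ) / 2) * S.det ^ (-(1 : ℝ) / 2) *
      Real.exp (-((x - μ₁) ⬝ᵥ (S⁻¹ *ᵥ (x - μ₁))) / 2))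
    (P₀ P₁ : Measure (Fin n → ℝ))
    (hP₀ : P₀ = volume.withDensity (fun x => ENNReal.ofReal (f₀ x)))
    (hP₁ : P₁ = volume.withDensity (fun x => ENNReal.ofReal (f₁ x)))
    (Δ : ℝ) (hΔ : Δ = Real.sqrt ((μ₁ - μ₀) ⬝ᵥ (S⁻¹ *ᵥ (μ₁ - μ₀))))
    (Φ : ℝ → ℝ)
    (hΦ : ∀ t, Φ t = ((ProbabilityTheory.gaussianReal 0 1) (Iic t)).toReal)
    (δ : ℝ) (hδ : 0 < δ) :
    (P₀ {x | f₁ x / f₀ x ≤ δ}).toReal = Φ ((Real.log δ + Δ ^ 2 / 2) / Δ) ∧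
    (P₁ {x | f₁ x / f₀ x > δ}).toReal = Φ ((-Real.log δ + Δ ^ 2 / 2) / Δ) := by
  simpa only [hP₀, hP₁, hΔ, hΦ, hf₀, hf₁, multivariateGaussianPDFReal, mahalanobisDist,
    cdf_eq_real, measureReal_def, Fintype.card_fin] using
    lda_sensitivity_specificity_general hS hμ hδ
end

section
/- In the LDA setting, let Δ > 0 and define π_{1|1}(δ) = Φ((−log δ + Δ²/2)/Δ) and π_{0|0}(δ) = Φ((log δ + Δ²/2)/Δ) for δ > 0, where Φ is the standard normal cumulative distribution function. Then δ = 1 solves the fixed-point equation for Yule's coefficients, namely δ = π_{1|1}(δ)(1 − π_{1|1}(δ)) / (π_{0|0}(δ)(1 − π_{0|0}(δ))); that is, the optimal Yule threshold in LDA equals 1 regardless of Δ and of the class proportion π. -/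
/-!
At `δ = 1` the two scores coincide because `log 1 = 0`, so sensitivity and specificity share a
common value `r` and the right-hand side is `r (1 - r) / (r (1 - r))`. This equals `1` because
`0 < r < 1`: a law of full support, such as the normal one, charges both half-lines
bounded by any point.
-/

open Set

open MeasureTheory ProbabilityTheory

section HalfLines

variable {X : Type*} [TopologicalSpace X] [LinearOrder X] [OrderTopology X] [MeasurableSpace X]
  (μ : Measure X) [μ.IsOpenPosMeasure]

lemma measureReal_Iic_pos_of_isOpenPosMeasure [NoMinOrder X] [IsFiniteMeasure μ] (x : X) :
    0 < μ.real (Iic x) :=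
  have lower_pos : 0 < μ (Iic x) :=
    (Measure.measure_Iio_pos μ x).trans_le (measure_mono Iio_subset_Iic_self)
  ENNReal.toReal_pos lower_pos.ne' (measure_ne_top μ _)

lemma measureReal_Iic_lt_one_of_isOpenPosMeasure [OpensMeasurableSpace X] [NoMaxOrder X]
    [IsProbabilityMeasure μ] (x : X) : μ.real (Iic x) < 1 := by
  have upper_pos : 0 < μ.real (Iic x)ᶜ := by
    rw [compl_Iic]
    exact ENNReal.toReal_pos (Measure.measure_Ioi_pos μ x).ne' (measure_ne_top μ _)
  rw [probReal_compl_eq_one_sub isClosed_Iic.measurableSet] at upper_pos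
  exact sub_pos.mp upper_pos

end HalfLines

lemma isOpenPosMeasure_gaussianReal (m : ℝ) {v : NNReal} (hv : v ≠ 0) :
    (gaussianReal m v).IsOpenPosMeasure :=
  (gaussianReal_absolutelyContinuous' m hv).isOpenPosMeasure

theorem yule_optimal_threshold_one_general
    (μ : Measure ℝ) [IsProbabilityMeasure μ] [μ.IsOpenPosMeasure]
    (Δ : ℝ) (_hΔ : Δ ≠ 0)
    (Φ : ℝ → ℝ)
    (hΦ : ∀ t, Φ t = μ.real (Iic t))
    (p q : ℝ → ℝ)
    (hp : ∀ δ : ℝ, p δ = Φ ((-Real.log δ + Δ ^ 2 / 2) / Δ))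
    (hq : ∀ δ : ℝ, q δ = Φ ((Real.log δ + Δ ^ 2 / 2) / Δ)) :
    (1 : ℝ) = p 1 * (1 - p 1) / (q 1 * (1 - q 1)) := by
  have rates_eq : p 1 = q 1 := by simp only [hp, hq, Real.log_one, neg_zero]
  have q_pos : 0 < q 1 := by
    rw [hq, hΦ]
    exact measureReal_Iic_pos_of_isOpenPosMeasure μ _
  have q_lt_one : q 1 < 1 := by
    rw [hq, hΦ]
    exact measureReal_Iic_lt_one_of_isOpenPosMeasure μ _
  rw [rates_eq, div_self (mul_pos q_pos (sub_pos.mpr q_lt_one)).ne']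

theorem yule_optimal_threshold_one
    (Δ : ℝ) (hΔ : 0 < Δ)
    (Φ : ℝ → ℝ)
    (hΦ : ∀ t, Φ t = ((ProbabilityTheory.gaussianReal 0 1) (Iic t)).toReal)
    (p q : ℝ → ℝ)
    (hp : ∀ δ : ℝ, p δ = Φ ((-Real.log δ + Δ ^ 2 / 2) / Δ))
    (hq : ∀ δ : ℝ, q δ = Φ ((Real.log δ + Δ ^ 2 / 2) / Δ)) :
    (1 : ℝ) = p 1 * (1 - p 1) / (q 1 * (1 - q 1)) :=
  have := isOpenPosMeasure_gaussianReal 0 one_ne_zero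
  yule_optimal_threshold_one_general (gaussianReal 0 1) Δ hΔ.ne' Φ hΦ p q hp hq
end

section
/- Fix c, d₁ ≥ 0 and d₀ > 0 with d₀ + d₁ − c > 0, fix β > 0, and define the robust F-score M_Frb(p,q,π) = ((d₀/π + β² + 1)/(1+c)) · (cπ + πp) / (d₀ + d₁π + πp + (1−q)(1−π)). Then for all p, q, π ∈ (0,1), the partial derivatives ∂_p M_Frb(p,q,π) and ∂_q M_Frb(p,q,π) are strictly positive. -/
open Set

/-!
Up to a positive factor independent of `p` and `q`, the metric is a quotient `N / D`. Raising the
sensitivity adds the same amount to `N` and `D`, which increases the quotient because `N < D`;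
raising the specificity only lowers `D`. The bound `N < D` comes from writing `D - N` as the
convex combination `(1 - π) * (d₀ + (1 - q)) + π * (d₀ + d₁ - c)`.
-/

/-- The normalizing factor of the robust F-score, the part in which `β` enters. -/
noncomputable def robustFScoreScale (c d₀ β π : ℝ) : ℝ :=
  (d₀ / π + β ^ 2 + 1) / (1 + c)

/-- The numerator of the robust F-score: the proportion `π * p` of true positives,
shifted by `c * π`. -/
def robustFScoreNum (c p π : ℝ) : ℝ :=
  c * π + π * p

/-- The denominator of the robust F-score: the proportion `π * p + (1 - q) * (1 - π)` of
positive predictions, shifted by `d₀ + d₁ * π`. -/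
def robustFScoreDenom (d₀ d₁ p q π : ℝ) : ℝ :=
  d₀ + d₁ * π + π * p + (1 - q) * (1 - π)

/-- The robust F-score `M_Frb(p, q, π)` with parameters `c`, `d₀`, `d₁`, `β`, as a function of the
sensitivity `p`, the specificity `q` and the proportion `π` of the positive class. -/
noncomputable def robustFScore (c d₀ d₁ β p q π : ℝ) : ℝ :=
  robustFScoreScale c d₀ β π * (robustFScoreNum c p π / robustFScoreDenom d₀ d₁ p q π)

section RobustFScore

variable {c d₀ d₁ β p q π : ℝ}

theorem robustFScoreScale_pos (hc : -1 < c) (hd₀ : 0 ≤ d₀) (hπ : 0 ≤ π) :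
    0 < robustFScoreScale c d₀ β π :=
  div_pos (by positivity) (by linarith)

theorem robustFScoreNum_pos (hp : 0 < c + p) (hπ : 0 < π) : 0 < robustFScoreNum c p π :=
  calc
    0 < π * (c + p) := mul_pos hπ hp
    _ = robustFScoreNum c p π := by unfold robustFScoreNum; ring

theorem robustFScoreDenom_sub_num (c d₀ d₁ p q π : ℝ) :
    robustFScoreDenom d₀ d₁ p q π - robustFScoreNum c p π =
      (1 - π) * (d₀ + (1 - q)) + π * (d₀ + d₁ - c) := by
  unfold robustFScoreDenom robustFScoreNum
  ring

theorem robustFScoreNum_lt_denom (hd₀ : 0 ≤ d₀) (hsum : 0 < d₀ + d₁ - c) (hq : q ≤ 1)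
    (hπ₀ : 0 < π) (hπ₁ : π ≤ 1) :
    robustFScoreNum c p π < robustFScoreDenom d₀ d₁ p q π := by
  rw [← sub_pos, robustFScoreDenom_sub_num]
  have hneg : 0 ≤ (1 - π) * (d₀ + (1 - q)) :=
    mul_nonneg (sub_nonneg.2 hπ₁) (add_nonneg hd₀ (sub_nonneg.2 hq))
  exact add_pos_of_nonneg_of_pos hneg (mul_pos hπ₀ hsum)

theorem hasDerivAt_robustFScore_sensitivity (hD : robustFScoreDenom d₀ d₁ p q π ≠ 0) :
    HasDerivAt (fun p' ↦ robustFScore c d₀ d₁ β p' q π)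
      (robustFScoreScale c d₀ β π *
        (π * (robustFScoreDenom d₀ d₁ p q π - robustFScoreNum c p π) /
          robustFScoreDenom d₀ d₁ p q π ^ 2)) p := by
  have hlin : HasDerivAt (fun p' ↦ π * p') π p := hasDerivAt_const_mul π
  have hnum : HasDerivAt (fun p' ↦ robustFScoreNum c p' π) π p := hlin.const_add _
  have hdenom : HasDerivAt (fun p' ↦ robustFScoreDenom d₀ d₁ p' q π) π p :=
    (hlin.const_add _).add_const _
  exact ((hnum.fun_div hdenom hD).const_mul _).congr_deriv (by ring)

theorem hasDerivAt_robustFScore_specificity (hD : robustFScoreDenom d₀ d₁ p q π ≠ 0) :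
    HasDerivAt (fun q' ↦ robustFScore c d₀ d₁ β p q' π)
      (robustFScoreScale c d₀ β π *
        (robustFScoreNum c p π * (1 - π) / robustFScoreDenom d₀ d₁ p q π ^ 2)) q := by
  have hdenom : HasDerivAt (fun q' ↦ robustFScoreDenom d₀ d₁ p q' π) (-1 * (1 - π)) q :=
    (((hasDerivAt_id q).const_sub 1).mul_const (1 - π)).const_add _
  exact (((hasDerivAt_const q (robustFScoreNum c p π)).fun_div hdenom hD).const_mul _).congr_deriv
    (by ring)

theorem robust_fscore_partials_pos_general (hc : -1 < c) (hd₀ : 0 ≤ d₀)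
    (hsum : 0 < d₀ + d₁ - c) (hp : 0 < c + p) (hq : q ≤ 1) (hπ : π ∈ Ioo (0 : ℝ) 1) :
    0 < deriv (fun p' ↦ robustFScore c d₀ d₁ β p' q π) p ∧
      0 < deriv (fun q' ↦ robustFScore c d₀ d₁ β p q' π) q := by
  obtain ⟨hπ₀, hπ₁⟩ := hπ
  have hscale : 0 < robustFScoreScale c d₀ β π := robustFScoreScale_pos hc hd₀ hπ₀.le
  have hnum : 0 < robustFScoreNum c p π := robustFScoreNum_pos hp hπ₀
  have hlt : robustFScoreNum c p π < robustFScoreDenom d₀ d₁ p q π :=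
    robustFScoreNum_lt_denom hd₀ hsum hq hπ₀ hπ₁.le
  have hdenom : 0 < robustFScoreDenom d₀ d₁ p q π := hnum.trans hlt
  rw [(hasDerivAt_robustFScore_sensitivity hdenom.ne').deriv,
    (hasDerivAt_robustFScore_specificity hdenom.ne').deriv]
  exact ⟨mul_pos hscale (div_pos (mul_pos hπ₀ (sub_pos.2 hlt)) (pow_pos hdenom 2)),
    mul_pos hscale (div_pos (mul_pos hnum (sub_pos.2 hπ₁)) (pow_pos hdenom 2))⟩

end RobustFScore

theorem robust_fscore_partials_pos
    (c d₀ d₁ : ℝ) (hc : 0 ≤ c) (hd₁ : 0 ≤ d₁) (hd₀ : 0 < d₀)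
    (hsum : 0 < d₀ + d₁ - c) (β : ℝ) (hβ : 0 < β)
    (M : ℝ → ℝ → ℝ → ℝ)
    (hM : ∀ p q π : ℝ, M p q π =
      ((d₀ / π + β ^ 2 + 1) / (1 + c)) *
        ((c * π + π * p) / (d₀ + d₁ * π + π * p + (1 - q) * (1 - π)))) :
    ∀ p q π : ℝ, p ∈ Ioo (0:ℝ) 1 → q ∈ Ioo (0:ℝ) 1 → π ∈ Ioo (0:ℝ) 1 →
      0 < deriv (fun p' => M p' q π) p ∧ 0 < deriv (fun q' => M p q' π) q := by
  obtain rfl : M = robustFScore c d₀ d₁ β := funext₃ hM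
  exact fun p q π hp hq hπ ↦ robust_fscore_partials_pos_general (by linarith) hd₀.le hsum
    (add_pos_of_nonneg_of_pos hc hp.1) hq.2.le hπ
end

section
/- Fix d > 0 and define the robust Matthews correlation coefficient M_MCCrb(p,q,π) = (d + π(1−π))^{1/2} · (pq − (1−p)(1−q)) / (d + (πp + (1−π)(1−q)) (π(1−p) + (1−π)q))^{1/2}. Then for all p, q, π ∈ (0,1), the ratio of partial derivatives satisfies ∂_q M_MCCrb(p,q,π) / ∂_p M_MCCrb(p,q,π) = ((2p−1)q − (q + p − 1)(2p − 1)π − p + 1 + 2d) / ((2q−1)(q + p − 1)π + 2q(1−q) + 2d). -/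
open Set

/-!
The coefficient is unchanged when the two classes are exchanged, i.e. under
`(p, q, π) ↦ (q, p, 1 - π)`, so only the derivative in `p` has to be computed. With `N = p + q - 1`
and `D` the radicand in the denominator, differentiating `N / √D` gives
`(2 D - N ∂ₚD) / (2 D √D)`. Since `D` is symmetric, the factor `1 / (2 D √D)` is common to both
partial derivatives and cancels in their ratio. The terms of `2 D - N ∂ₚD` that are quadratic in
`π N` cancel as well, which leaves an expression affine in `π`.
-/

theorem hasDerivAt_div_sqrt {f g : ℝ → ℝ} {f' g' x : ℝ} (hf : HasDerivAt f f' x)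
    (hg : HasDerivAt g g' x) (hx : 0 < g x) :
    HasDerivAt (fun y => f y / √(g y)) ((2 * f' * g x - f x * g') / (2 * g x * √(g x))) x := by
  have hs : 0 < √(g x) := Real.sqrt_pos.mpr hx
  have hsq : √(g x) ^ 2 = g x := Real.sq_sqrt hx.le
  refine (hf.fun_div (hg.sqrt hx.ne') hs.ne').congr_deriv ?_
  field_simp
  rw [hsq]
  ring

/-- The variance of the predicted class of a classifier with sensitivity `p` and specificity `q`
when positives have proportion `π`: the probability of a positive prediction times that of a
negative one. -/
def predictionVariance (p q π : ℝ) : ℝ :=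
  (π * p + (1 - π) * (1 - q)) * (π * (1 - p) + (1 - π) * q)

/-- The robust Matthews correlation coefficient `M_MCCrb(p, q, π)` with regularization
parameter `d`. -/
noncomputable def robustMCC (d p q π : ℝ) : ℝ :=
  √(d + π * (1 - π)) * (p * q - (1 - p) * (1 - q)) / √(d + predictionVariance p q π)

/-- The factor of `∂ₚ M_MCCrb` that is not symmetric under exchanging the two classes; its value at
`(q, p, 1 - π)` is the corresponding factor of the derivative in `q`. -/
def sensitivitySlope (d p q π : ℝ) : ℝ :=
  (2 * q - 1) * (q + p - 1) * π + 2 * q * (1 - q) + 2 * d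

section

variable {d p q π : ℝ}

theorem predictionVariance_swap (p q π : ℝ) :
    predictionVariance q p (1 - π) = predictionVariance p q π := by
  unfold predictionVariance
  ring

theorem predictionVariance_nonneg (hp : p ∈ Icc 0 1) (hq : q ∈ Icc 0 1) (hπ : π ∈ Icc 0 1) :
    0 ≤ predictionVariance p q π := by
  obtain ⟨hp₀, hp₁⟩ := hp
  obtain ⟨hq₀, hq₁⟩ := hq
  obtain ⟨hπ₀, hπ₁⟩ := hπ
  rw [← sub_nonneg] at hp₁ hq₁ hπ₁
  unfold predictionVariance
  positivity

theorem hasDerivAt_predictionVariance (p q π : ℝ) :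
    HasDerivAt (fun p' => predictionVariance p' q π)
      (π * (π * (1 - p) + (1 - π) * q) - π * (π * p + (1 - π) * (1 - q))) p := by
  have hpos : HasDerivAt (fun p' => π * p' + (1 - π) * (1 - q)) (π * 1) p :=
    ((hasDerivAt_id' p).const_mul π).add_const _
  have hneg : HasDerivAt (fun p' => π * (1 - p') + (1 - π) * q) (π * -1) p :=
    (((hasDerivAt_id' p).const_sub 1).const_mul π).add_const _
  exact (hpos.fun_mul hneg).congr_deriv (by ring)

theorem robustMCC_swap (d p q π : ℝ) : robustMCC d q p (1 - π) = robustMCC d p q π := by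
  unfold robustMCC
  rw [predictionVariance_swap]
  ring_nf

theorem sensitivitySlope_swap (d p q π : ℝ) :
    sensitivitySlope d q p (1 - π) =
      (2 * p - 1) * q - (q + p - 1) * (2 * p - 1) * π - p + 1 + 2 * d := by
  unfold sensitivitySlope
  ring

theorem sensitivitySlope_eq_convexCombination (d p q π : ℝ) :
    sensitivitySlope d p q π =
      (1 - π) * (2 * q * (1 - q)) + π * (p * q + (1 - p) * (1 - q)) + 2 * d := by
  unfold sensitivitySlope
  ring

theorem sensitivitySlope_pos (hd : 0 < d) (hp : p ∈ Icc 0 1) (hq : q ∈ Icc 0 1)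
    (hπ : π ∈ Icc 0 1) : 0 < sensitivitySlope d p q π := by
  obtain ⟨hp₀, hp₁⟩ := hp
  obtain ⟨hq₀, hq₁⟩ := hq
  obtain ⟨hπ₀, hπ₁⟩ := hπ
  rw [← sub_nonneg] at hp₁ hq₁ hπ₁
  rw [sensitivitySlope_eq_convexCombination]
  positivity

theorem hasDerivAt_robustMCC_sensitivity (h : 0 < d + predictionVariance p q π) :
    HasDerivAt (fun p' => robustMCC d p' q π)
      (√(d + π * (1 - π)) /
          (2 * (d + predictionVariance p q π) * √(d + predictionVariance p q π)) *
        sensitivitySlope d p q π) p := by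
  have hnum : HasDerivAt (fun p' => √(d + π * (1 - π)) * (p' * q - (1 - p') * (1 - q)))
      (√(d + π * (1 - π)) * (1 * q - -1 * (1 - q))) p :=
    (((hasDerivAt_id' p).mul_const q).fun_sub
      (((hasDerivAt_id' p).const_sub 1).mul_const (1 - q))).const_mul _
  have hslope : 2 * (d + predictionVariance p q π) - (p * q - (1 - p) * (1 - q)) *
      (π * (π * (1 - p) + (1 - π) * q) - π * (π * p + (1 - π) * (1 - q))) =
        sensitivitySlope d p q π := by
    unfold predictionVariance sensitivitySlope
    ring
  refine (hasDerivAt_div_sqrt hnum ((hasDerivAt_predictionVariance p q π).const_add d)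
    h).congr_deriv ?_
  rw [← hslope]
  ring

theorem hasDerivAt_robustMCC_specificity (h : 0 < d + predictionVariance p q π) :
    HasDerivAt (fun q' => robustMCC d p q' π)
      (√(d + π * (1 - π)) /
          (2 * (d + predictionVariance p q π) * √(d + predictionVariance p q π)) *
        sensitivitySlope d q p (1 - π)) q := by
  have hswap := hasDerivAt_robustMCC_sensitivity (d := d) (p := q) (q := p) (π := 1 - π)
    (by rwa [predictionVariance_swap])
  simpa only [robustMCC_swap, predictionVariance_swap, sub_sub_cancel, mul_comm (1 - π) π]
    using hswap

theorem robust_mcc_partial_ratio_general (hπ : 0 < d + π * (1 - π))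
    (hV : 0 < d + predictionVariance p q π) (hslope : sensitivitySlope d p q π ≠ 0) :
    deriv (fun p' => robustMCC d p' q π) p ≠ 0 ∧
      deriv (fun q' => robustMCC d p q' π) q / deriv (fun p' => robustMCC d p' q π) p
        = ((2 * p - 1) * q - (q + p - 1) * (2 * p - 1) * π - p + 1 + 2 * d) /
          ((2 * q - 1) * (q + p - 1) * π + 2 * q * (1 - q) + 2 * d) := by
  have hcommon : √(d + π * (1 - π)) /
      (2 * (d + predictionVariance p q π) * √(d + predictionVariance p q π)) ≠ 0 := by
    positivity
  rw [(hasDerivAt_robustMCC_sensitivity hV).deriv, (hasDerivAt_robustMCC_specificity hV).deriv]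
  refine ⟨mul_ne_zero hcommon hslope, ?_⟩
  rw [mul_div_mul_left _ _ hcommon, sensitivitySlope_swap, sensitivitySlope]

end

theorem robust_mcc_partial_ratio
    (d : ℝ) (hd : 0 < d)
    (M : ℝ → ℝ → ℝ → ℝ)
    (hM : ∀ p q π : ℝ, M p q π =
      Real.sqrt (d + π * (1 - π)) * (p * q - (1 - p) * (1 - q)) /
      Real.sqrt (d + (π * p + (1 - π) * (1 - q)) * (π * (1 - p) + (1 - π) * q))) :
    ∀ p q π : ℝ, p ∈ Ioo (0:ℝ) 1 → q ∈ Ioo (0:ℝ) 1 → π ∈ Ioo (0:ℝ) 1 →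
      deriv (fun q' => M p q' π) q / deriv (fun p' => M p' q π) p
        = ((2 * p - 1) * q - (q + p - 1) * (2 * p - 1) * π - p + 1 + 2 * d) /
          ((2 * q - 1) * (q + p - 1) * π + 2 * q * (1 - q) + 2 * d) := by
  intro p q π hp hq hπ
  obtain rfl : M = robustMCC d := funext₃ hM
  replace hp := Ioo_subset_Icc_self hp
  replace hq := Ioo_subset_Icc_self hq
  replace hπ := Ioo_subset_Icc_self hπ
  have hlabel : 0 ≤ π * (1 - π) := mul_nonneg hπ.1 (sub_nonneg.mpr hπ.2)
  exact (robust_mcc_partial_ratio_general (add_pos_of_pos_of_nonneg hd hlabel)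
    (add_pos_of_pos_of_nonneg hd (predictionVariance_nonneg hp hq hπ))
    (sensitivitySlope_pos hd hp hq hπ).ne').2
end
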